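/- arXiv:1806.06971 — 2 statements merged into one kernel-verified Lean document; each statement's English description precedes it below -/
import Mathlib

section
/- The form b̃ on V[t,t⁻¹] is anisotropic: for every v ∈ V[t,t⁻¹], if b̃(v,v) = 0 then v = 0. Equivalently, if v = ∑_i t^i v_i is nonzero then there exists n ∈ ℤ with ∑_i b(v_{i−n}, v_i) ≠ 0. -/
open Finsupp

variable (k : Type*) [Field k] (V : Type*) [AddCommGroup V] [Module k V]

/-- The coefficient of `tⁿ` of `b̃(v,w) = ∑ₙ tⁿ (∑ᵢ b(v_{i-n}, w_i))`. -/
noncomputable def Btilde (b : LinearMap.BilinForm k V) (n : ℤ) (v w : ℤ →₀ V) : k :=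
  w.sum fun i wi => b (v (i - n)) wi

/-!
Let `F = b̃(v, v)`. Evaluating at `t = 1`, which is `Finsupp.degree` on coefficient families,
turns `F = 0` into `b(v(1), v(1)) = 0`, so `v(1) = 0` by anisotropy and `v = (1 - t) w` with `w` of
smaller width. Then `F = (1 - t⁻¹) (1 - t) b̃(w, w)`, and as `1 - t ^ c` acts injectively on Laurent
polynomials for `c ≠ 0`, also `b̃(w, w) = 0`: induct on the width.
-/

theorem exists_subset_Ico_add_natCast (s : Finset ℤ) :
    ∃ (a : ℤ) (n : ℕ), s ⊆ Finset.Ico a (a + n) := by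
  obtain ⟨a, ha⟩ := s.bddBelow
  obtain ⟨c, hc⟩ := s.bddAbove
  refine ⟨a, (c + 1 - a).toNat, fun i hi ↦ ?_⟩
  have hai : a ≤ i := ha hi
  have hic : i ≤ c := hc hi
  rw [Finset.mem_Ico]
  omega

theorem finsupp_eq_zero_of_periodic {G M : Type*} [AddGroup G] [Zero M] {v : G →₀ M} {c : G}
    (hc : ¬IsOfFinAddOrder c) (hv : Function.Periodic v c) : v = 0 := by
  ext i
  by_contra hi
  have translate_mem_support (n : ℤ) : i + n • c ∈ (v.support : Set G) := by
    rwa [Finset.mem_coe, mem_support_iff, hv.zsmul n i]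
  have translate_injective : Function.Injective fun n : ℤ ↦ i + n • c :=
    (add_right_injective i).comp (injective_zsmul_iff_not_isOfFinAddOrder.2 hc)
  exact Set.infinite_of_injective_forall_mem translate_injective translate_mem_support
    v.support.finite_toSet

section LaurentForm

variable {M N A : Type*} [AddCommMonoid M] [AddCommMonoid N] [AddCommMonoid A]

/-- The extension of a biadditive map `b` to `M[t,t⁻¹] × N[t,t⁻¹] → A[t,t⁻¹]` with
`(t ^ j x, t ^ i y) ↦ t ^ (i - j) b(x, y)`; a Laurent polynomial is encoded as the finitely
supported family of its coefficients. For a bilinear form `b` this is `b̃`, and `Btilde` lists its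
coefficients. -/
noncomputable def laurentForm (b : M →+ N →+ A) : (ℤ →₀ M) →+ (ℤ →₀ N) →+ (ℤ →₀ A) :=
  liftAddHom fun j ↦ liftAddHom.toAddMonoidHom.comp <|
    AddMonoidHom.pi fun i ↦ (singleAddHom (i - j)).compHom.comp b

theorem laurentForm_single_single (b : M →+ N →+ A) (j i : ℤ) (x : M) (y : N) :
    laurentForm b (single j x) (single i y) = single (i - j) (b x y) := by
  simp [laurentForm]

theorem laurentForm_apply (b : M →+ N →+ A) (v : ℤ →₀ M) (w : ℤ →₀ N) (n : ℤ) :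
    laurentForm b v w n = w.sum fun i y ↦ b (v (i - n)) y := by
  induction w using Finsupp.induction_linear with
  | zero => simp
  | add w₁ w₂ h₁ h₂ => simp [h₁, h₂, sum_add_index']
  | single i y =>
    induction v using Finsupp.induction_linear with
    | zero => simp
    | add v₁ v₂ h₁ h₂ => simp_all
    | single j x =>
      have : i - j = n ↔ j = i - n := by omega
      simp only [laurentForm_single_single, single_apply, map_zero, sum_single_index, this]
      split_ifs <;> simp

theorem degree_laurentForm (b : M →+ N →+ A) (v : ℤ →₀ M) (w : ℤ →₀ N) :
    (laurentForm b v w).degree = b v.degree w.degree := by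
  induction v using Finsupp.induction_linear with
  | zero => simp
  | add v₁ v₂ h₁ h₂ => simp [h₁, h₂]
  | single j x =>
    induction w using Finsupp.induction_linear with
    | zero => simp
    | add w₁ w₂ h₁ h₂ => simp_all
    | single i y => simp [laurentForm_single_single]

/-- Multiplication by `t ^ c` on `M[t,t⁻¹]`, so that multiplication by `1 - t ^ c` is
`v ↦ v - laurentShift c v`. -/
noncomputable def laurentShift (c : ℤ) : (ℤ →₀ M) ≃+ (ℤ →₀ M) :=
  Finsupp.domCongr (Equiv.addRight c)

theorem laurentShift_apply (c : ℤ) (v : ℤ →₀ M) (i : ℤ) : laurentShift c v i = v (i - c) := by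
  simp [laurentShift, sub_eq_add_neg]

theorem laurentForm_laurentShift_left (b : M →+ N →+ A) (c : ℤ) (v : ℤ →₀ M) (w : ℤ →₀ N) :
    laurentForm b (laurentShift c v) w = laurentShift (-c) (laurentForm b v w) := by
  ext n
  simp only [laurentForm_apply, laurentShift_apply, sub_neg_eq_add, sub_sub]

theorem laurentForm_laurentShift_right (b : M →+ N →+ A) (c : ℤ) (v : ℤ →₀ M) (w : ℤ →₀ N) :
    laurentForm b v (laurentShift c w) = laurentShift c (laurentForm b v w) := by
  ext n
  rw [laurentShift_apply, laurentForm_apply, laurentForm_apply, laurentShift, domCongr_apply,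
    equivMapDomain_eq_mapDomain, sum_mapDomain_index (by simp) (by simp)]
  simp [sub_sub_eq_add_sub]

end LaurentForm

section Anisotropic

variable {M N A : Type*} [AddCommGroup M] [AddCommGroup N] [AddCommGroup A]

theorem eq_zero_of_sub_laurentShift_eq_zero {v : ℤ →₀ M} {c : ℤ} (hc : c ≠ 0)
    (h : v - laurentShift c v = 0) : v = 0 :=
  finsupp_eq_zero_of_periodic (not_isOfFinAddOrder_of_isAddTorsionFree hc) fun i ↦ by
    simpa [laurentShift_apply] using DFunLike.congr_fun (sub_eq_zero.1 h) (i + c)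

theorem laurentForm_sub_laurentShift (b : M →+ N →+ A) (c : ℤ) (v : ℤ →₀ M) (w : ℤ →₀ N) :
    laurentForm b (v - laurentShift c v) (w - laurentShift c w) =
      (laurentForm b v w - laurentShift c (laurentForm b v w)) -
        laurentShift (-c) (laurentForm b v w - laurentShift c (laurentForm b v w)) := by
  rw [map_sub (laurentForm b) v, AddMonoidHom.sub_apply, laurentForm_laurentShift_left,
    map_sub (laurentForm b v), laurentForm_laurentShift_right]

theorem exists_sub_laurentShift_one_eq_of_degree_eq_zero {v : ℤ →₀ M} {a c : ℤ}
    (hv : v.support ⊆ Finset.Ico a (c + 1)) (hdeg : v.degree = 0) :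
    ∃ w : ℤ →₀ M, w.support ⊆ Finset.Ico a c ∧ w - laurentShift 1 w = v := by
  let partialSum (i : ℤ) : M := v.sum fun j x ↦ if j ≤ i then x else 0
  have mem_bounds (j : ℤ) (hj : j ∈ v.support) : a ≤ j ∧ j ≤ c := by
    simpa only [Finset.mem_Ico, Int.lt_add_one_iff] using hv hj
  have partialSum_of_lt (i : ℤ) (hi : i < a) : partialSum i = 0 :=
    Finset.sum_eq_zero fun j hj ↦ if_neg (hi.trans_le (mem_bounds j hj).1).not_ge
  have partialSum_of_ge (i : ℤ) (hi : c ≤ i) : partialSum i = 0 :=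
    (Finset.sum_congr rfl fun j hj ↦ if_pos ((mem_bounds j hj).2.trans hi)).trans hdeg
  have mem_Ico_of_partialSum_ne_zero (i : ℤ) (hi : partialSum i ≠ 0) : i ∈ Finset.Ico a c :=
    Finset.mem_Ico.2 ⟨not_lt.1 (mt (partialSum_of_lt i) hi), not_le.1 (mt (partialSum_of_ge i) hi)⟩
  have partialSum_sub_pred (i : ℤ) : partialSum i - partialSum (i - 1) = v i := by
    calc partialSum i - partialSum (i - 1) = v.sum fun j x ↦ if j = i then x else 0 := by
          rw [← Finsupp.sum_sub]
          exact Finsupp.sum_congr fun j _ ↦ by grind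
      _ = v i := by simp
  refine ⟨onFinset (Finset.Ico a c) partialSum mem_Ico_of_partialSum_ne_zero,
    support_onFinset_subset, ?_⟩
  ext i
  simpa [laurentShift_apply] using partialSum_sub_pred i

theorem stmt2_general (b : M →+ M →+ A) (haniso : ∀ x, b x x = 0 → x = 0) (v : ℤ →₀ M)
    (hv : laurentForm b v v = 0) : v = 0 := by
  obtain ⟨a, n, hsupp⟩ := exists_subset_Ico_add_natCast v.support
  induction n generalizing v with
  | zero => simpa using hsupp
  | succ n ih =>
    have hdeg : v.degree = 0 := haniso _ (by rw [← degree_laurentForm, hv, map_zero])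
    rw [Nat.cast_succ, ← add_assoc] at hsupp
    obtain ⟨w, hw, rfl⟩ := exists_sub_laurentShift_one_eq_of_degree_eq_zero hsupp hdeg
    rw [laurentForm_sub_laurentShift] at hv
    have hww : laurentForm b w w = 0 :=
      eq_zero_of_sub_laurentShift_eq_zero one_ne_zero <|
        eq_zero_of_sub_laurentShift_eq_zero (by decide) hv
    rw [ih w hww hw, map_zero, sub_zero]

end Anisotropic

theorem Btilde_eq_laurentForm (b : LinearMap.BilinForm k V) (n : ℤ) (v w : ℤ →₀ V) :
    Btilde k V b n v w =
      laurentForm (LinearMap.toAddMonoidHom'.comp b.toAddMonoidHom) v w n := by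
  rw [laurentForm_apply]
  rfl

/-- The extended form `b̃` on `V[t,t⁻¹]` is anisotropic:
`b̃(v,v) = 0` (i.e. all its Laurent coefficients vanish) implies `v = 0`;
equivalently, if `v ≠ 0` then some coefficient `∑ᵢ b(v_{i-n}, v_i)` is nonzero. -/
theorem stmt2 [FiniteDimensional k V] (b : LinearMap.BilinForm k V)
    (hsymm : ∀ v w : V, b v w = b w v)
    (haniso : ∀ v : V, b v v = 0 → v = 0) :
    (∀ v : ℤ →₀ V, (∀ n : ℤ, Btilde k V b n v v = 0) → v = 0) ∧
    (∀ v : ℤ →₀ V, v ≠ 0 → ∃ n : ℤ, Btilde k V b n v v ≠ 0) := by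
  have main (v : ℤ →₀ V) (hv : ∀ n, Btilde k V b n v v = 0) : v = 0 :=
    stmt2_general (LinearMap.toAddMonoidHom'.comp b.toAddMonoidHom) haniso v <|
      Finsupp.ext fun n ↦ (Btilde_eq_laurentForm k V b n v v).symm.trans (hv n)
  exact ⟨main, fun v hv ↦ not_forall.1 (mt (main v) hv)⟩
end

section
/- (i) If φ ∈ PPU(b)⁺ then φ⁻¹ ∈ PPU(b)⁻; (ii) PPU(b)⁺ ∩ PPU(b)⁻ = {id}; in particular PPU(b)⁺ is a submonoid of PPU(b) with PPU(b)⁺ ∩ (PPU(b)⁺)⁻¹ = {id}, and therefore the relation φ ≤ ψ :⟺ ψφ⁻¹ ∈ PPU(b)⁺ (equivalently φψ⁻¹ ∈ PPU(b)⁻) is a right-invariant partial order on PPU(b) with positive cone PPU(b)⁺ and negative cone PPU(b)⁻. -/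
open Finsupp

variable (k : Type*) [Field k] (V : Type*) [AddCommGroup V] [Module k V]

/-- Multiplication by `t^n` on `V[t,t⁻¹] := ℤ →₀ V` (writing `v = ∑ᵢ tⁱ vᵢ` as the
finitely supported function `i ↦ vᵢ`). -/
noncomputable def shift (n : ℤ) : (ℤ →₀ V) ≃ₗ[k] (ℤ →₀ V) :=
  Finsupp.domLCongr (Equiv.addRight n)

/-- `φ` is a paraunitary transformation: an invertible `k[t,t⁻¹]`-linear
(i.e. `k`-linear and commuting with multiplication by `t`) endomorphism of
`V[t,t⁻¹]` preserving `b̃`. -/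
def IsPU (b : LinearMap.BilinForm k V) (φ : (ℤ →₀ V) ≃ₗ[k] (ℤ →₀ V)) : Prop :=
  (∀ v, φ (shift k V 1 v) = shift k V 1 (φ v)) ∧
  ∀ (n : ℤ) (v w : ℤ →₀ V), Btilde k V b n (φ v) (φ w) = Btilde k V b n v w

/-- The specialization `t = 1` of a `k[t,t⁻¹]`-linear endomorphism `f = ∑ᵢ tⁱ fᵢ`
of `V[t,t⁻¹]`, i.e. the endomorphism `ε₁(f) = ∑ᵢ fᵢ` of `V`. -/
noncomputable def eps (f : (ℤ →₀ V) →ₗ[k] (ℤ →₀ V)) : V →ₗ[k] V :=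
  (Finsupp.lsum k fun _ : ℤ => (LinearMap.id : V →ₗ[k] V)) ∘ₗ f ∘ₗ Finsupp.lsingle 0

/-- `φ` is pure paraunitary: paraunitary and specializing to the identity at `t = 1`. -/
def IsPPU (b : LinearMap.BilinForm k V) (φ : (ℤ →₀ V) ≃ₗ[k] (ℤ →₀ V)) : Prop :=
  IsPU k V b φ ∧ eps k V (φ : (ℤ →₀ V) →ₗ[k] (ℤ →₀ V)) = LinearMap.id

/-- `φ ∈ PPU(b)⁻`: pure paraunitary and all Laurent coefficients `φᵢ` for `i > 0` vanish. -/
def PPUneg (b : LinearMap.BilinForm k V) (φ : (ℤ →₀ V) ≃ₗ[k] (ℤ →₀ V)) : Prop :=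
  IsPPU k V b φ ∧ ∀ (x : V) (i : ℤ), 0 < i → φ (Finsupp.single 0 x) i = 0

/-- `φ ∈ PPU(b)⁺`: pure paraunitary and all Laurent coefficients `φᵢ` for `i < 0` vanish. -/
def PPUpos (b : LinearMap.BilinForm k V) (φ : (ℤ →₀ V) ≃ₗ[k] (ℤ →₀ V)) : Prop :=
  IsPPU k V b φ ∧ ∀ (x : V) (i : ℤ), i < 0 → φ (Finsupp.single 0 x) i = 0

/-! The coefficients of an isometry `φ` and of its inverse are adjoint to each other,
`b (y, (φ⁻¹)ᵢ x) = b (φ₋ᵢ y, x)`, so for nondegenerate `b` passing to the inverse reflects the set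
of exponents at the origin and exchanges `PPU(b)⁺` with `PPU(b)⁻`. An element of both monoids is
concentrated in degree `0`, hence equal to its specialization at `t = 1`, which is the identity. -/

section

open scoped Pointwise

variable {k V}

section LaurentLinear

variable {f : Module.End k (ℤ →₀ V)}

theorem shift_apply (n : ℤ) (v : ℤ →₀ V) (i : ℤ) : shift k V n v i = v (i - n) := by
  simp [shift, sub_eq_add_neg]

theorem shift_single (n m : ℤ) (x : V) : shift k V n (single m x) = single (m + n) x := by
  simp [shift]

theorem shift_zero (v : ℤ →₀ V) : shift k V 0 v = v := by
  ext i
  simp only [shift_apply, sub_zero]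

theorem shift_shift (m n : ℤ) (v : ℤ →₀ V) :
    shift k V m (shift k V n v) = shift k V (m + n) v := by
  ext i
  simp only [shift_apply, sub_sub]

theorem map_shift (hf : Function.Commute f (shift k V 1)) (n : ℤ) (v : ℤ →₀ V) :
    f (shift k V n v) = shift k V n (f v) := by
  induction n with
  | zero => rw [shift_zero, shift_zero]
  | succ m ih => rw [add_comm, ← shift_shift, hf, ih, shift_shift]
  | pred m ih =>
    apply (shift k V 1).injective
    rw [← hf, shift_shift, shift_shift, add_sub_cancel, ih]

theorem map_eq_sum_shift (hf : Function.Commute f (shift k V 1)) (v : ℤ →₀ V) :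
    f v = v.sum fun n x => shift k V n (f (single 0 x)) := by
  conv_lhs => rw [← v.sum_single, map_finsuppSum]
  simp only [← map_shift hf, shift_single, zero_add]

variable (k) in
/-- Evaluation at `t = 1`, the map `∑ᵢ tⁱ vᵢ ↦ ∑ᵢ vᵢ` from `V[t,t⁻¹]` to `V`, through which `eps`
specializes endomorphisms. -/
noncomputable def evalOne : (ℤ →₀ V) →ₗ[k] V :=
  Finsupp.lsum k fun _ : ℤ => (LinearMap.id : V →ₗ[k] V)

theorem evalOne_apply (v : ℤ →₀ V) : evalOne k v = v.sum fun _ x => x :=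
  rfl

theorem evalOne_shift (n : ℤ) (v : ℤ →₀ V) :
    evalOne k (shift k V n v) = evalOne k v := by
  simp only [evalOne_apply, shift, domLCongr_apply, domCongr_apply, sum_equivMapDomain]

theorem eps_apply (f : Module.End k (ℤ →₀ V)) (x : V) :
    eps k V f x = evalOne k (f (single 0 x)) :=
  rfl

theorem evalOne_map (hf : Function.Commute f (shift k V 1)) (v : ℤ →₀ V) :
    evalOne k (f v) = eps k V f (evalOne k v) := by
  rw [map_eq_sum_shift hf, evalOne_apply v, map_finsuppSum, map_finsuppSum]
  simp only [evalOne_shift, eps_apply]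

theorem eps_one : eps k V (1 : Module.End k (ℤ →₀ V)) = 1 := by
  ext x
  simp [eps_apply, evalOne]

theorem eps_mul (hf : Function.Commute f (shift k V 1)) (g : Module.End k (ℤ →₀ V)) :
    eps k V (f * g) = eps k V f * eps k V g :=
  LinearMap.ext fun x => evalOne_map hf (g (single 0 x))

/-- The set of exponents `i` for which the coefficient `fᵢ` of `f = ∑ᵢ tⁱ fᵢ` is nonzero. The
coefficients are read off on constants, `fᵢ x = f (single 0 x) i`, so they determine `f` only when
`f` commutes with multiplication by `t`. -/
def laurentSupport (f : Module.End k (ℤ →₀ V)) : Set ℤ :=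
  {i | ∃ x, f (single 0 x) i ≠ 0}

theorem map_single_eq_zero_of_notMem_laurentSupport {i : ℤ} (hi : i ∉ laurentSupport f) (x : V) :
    f (single 0 x) i = 0 :=
  not_not.1 fun h => hi ⟨x, h⟩

theorem laurentSupport_one_subset : laurentSupport (1 : Module.End k (ℤ →₀ V)) ⊆ {0} := by
  rintro i ⟨x, hx⟩
  by_contra hi
  exact hx (single_eq_of_ne hi)

theorem laurentSupport_mul_subset (hf : Function.Commute f (shift k V 1))
    (g : Module.End k (ℤ →₀ V)) :
    laurentSupport (f * g) ⊆ laurentSupport f + laurentSupport g := by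
  rintro i ⟨x, hx⟩
  rw [Module.End.mul_apply, map_eq_sum_shift hf, Finsupp.sum_apply] at hx
  simp only [shift_apply] at hx
  obtain ⟨n, hn, hfn⟩ := Finset.exists_ne_zero_of_sum_ne_zero hx
  exact ⟨i - n, ⟨_, hfn⟩, n, ⟨x, mem_support_iff.1 hn⟩, sub_add_cancel i n⟩

theorem eq_one_of_laurentSupport_subset_zero (hf : Function.Commute f (shift k V 1))
    (heps : eps k V f = LinearMap.id) (hsupp : laurentSupport f ⊆ {0}) : f = 1 := by
  have map_single_zero (x : V) : f (single 0 x) = single 0 x := by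
    obtain ⟨y, hy⟩ : ∃ y, f (single 0 x) = single 0 y :=
      ⟨_, eq_single_iff.2 ⟨fun i hi => by
        simpa using hsupp ⟨x, mem_support_iff.1 hi⟩, rfl⟩⟩
    have hyx : y = x := by simpa [eps_apply, hy, evalOne] using LinearMap.congr_fun heps x
    rw [hy, hyx]
  refine LinearMap.ext fun v => ?_
  rw [map_eq_sum_shift hf]
  simp only [map_single_zero, shift_single, zero_add, sum_single, Module.End.one_apply]

end LaurentLinear

variable {b : LinearMap.BilinForm k V} {φ ψ : (ℤ →₀ V) ≃ₗ[k] (ℤ →₀ V)}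

theorem Btilde_single_right (n j : ℤ) (v : ℤ →₀ V) (x : V) :
    Btilde k V b n v (single j x) = b (v (j - n)) x := by
  simp [Btilde]

theorem Btilde_single_zero_left (n : ℤ) (y : V) (w : ℤ →₀ V) :
    Btilde k V b n (single 0 y) w = b y (w n) := by
  rw [Btilde, Finsupp.sum_eq_single n]
  · rw [sub_self, single_eq_same]
  · intro i _ hi
    rw [single_eq_of_ne (sub_ne_zero.2 hi), map_zero, LinearMap.zero_apply]
  · exact fun _ => map_zero _

theorem bilin_inv_coeff_eq_bilin_coeff_neg
    (hφ : ∀ n v w, Btilde k V b n (φ v) (φ w) = Btilde k V b n v w) (x y : V) (i : ℤ) :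
    b y (φ⁻¹ (single 0 x) i) = b (φ (single 0 y) (-i)) x :=
  calc b y (φ⁻¹ (single 0 x) i)
      = Btilde k V b i (single 0 y) (φ⁻¹ (single 0 x)) := (Btilde_single_zero_left ..).symm
    _ = Btilde k V b i (φ (single 0 y)) (φ (φ⁻¹ (single 0 x))) := (hφ ..).symm
    _ = Btilde k V b i (φ (single 0 y)) (single 0 x) := congrArg _ (φ.apply_symm_apply _)
    _ = b (φ (single 0 y) (-i)) x := by rw [Btilde_single_right, zero_sub]

theorem laurentSupport_inv_subset (hb : b.SeparatingRight)
    (hφ : ∀ n v w, Btilde k V b n (φ v) (φ w) = Btilde k V b n v w) :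
    laurentSupport (φ⁻¹).toLinearMap ⊆ -laurentSupport φ.toLinearMap := by
  rintro i ⟨x, hx⟩
  by_contra hi
  refine hx (hb _ fun y => ?_)
  have hcoeff : φ (single 0 y) (-i) = 0 := map_single_eq_zero_of_notMem_laurentSupport hi y
  rw [LinearEquiv.coe_coe, bilin_inv_coeff_eq_bilin_coeff_neg hφ, hcoeff, map_zero,
    LinearMap.zero_apply]

namespace IsPU

theorem commute_shift (hφ : IsPU k V b φ) :
    Function.Commute φ.toLinearMap (shift k V 1) :=
  hφ.1

protected theorem one : IsPU k V b 1 :=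
  ⟨fun _ => rfl, fun _ _ _ => rfl⟩

protected theorem mul (hφ : IsPU k V b φ) (hψ : IsPU k V b ψ) : IsPU k V b (φ * ψ) :=
  ⟨hφ.commute_shift.comp_left hψ.commute_shift,
    fun n v w => (hφ.2 n (ψ v) (ψ w)).trans (hψ.2 n v w)⟩

protected theorem inv (hφ : IsPU k V b φ) : IsPU k V b φ⁻¹ := by
  have hinv (v) : φ (φ⁻¹ v) = v := φ.apply_symm_apply v
  refine ⟨fun v => φ.injective ?_, fun n v w => ?_⟩
  · rw [hφ.1, hinv, hinv]
  · rw [← hφ.2, hinv, hinv]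

end IsPU

namespace IsPPU

protected theorem one : IsPPU k V b 1 :=
  ⟨.one, eps_one⟩

protected theorem mul (hφ : IsPPU k V b φ) (hψ : IsPPU k V b ψ) : IsPPU k V b (φ * ψ) := by
  refine ⟨hφ.1.mul hψ.1, (eps_mul hφ.1.commute_shift ψ.toLinearMap).trans ?_⟩
  rw [hφ.2, hψ.2]
  rfl

protected theorem inv (hφ : IsPPU k V b φ) : IsPPU k V b φ⁻¹ := by
  refine ⟨hφ.1.inv, ?_⟩
  calc eps k V (φ⁻¹).toLinearMap
      = eps k V φ.toLinearMap * eps k V (φ⁻¹).toLinearMap := by rw [hφ.2]; rfl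
    _ = eps k V (φ * φ⁻¹).toLinearMap := (eps_mul hφ.1.commute_shift _).symm
    _ = LinearMap.id := by rw [mul_inv_cancel]; exact eps_one

end IsPPU

theorem ppuPos_iff_laurentSupport_subset : PPUpos k V b φ ↔
    IsPPU k V b φ ∧ laurentSupport φ.toLinearMap ⊆ Set.Ici 0 := by
  refine and_congr_right fun _ => ⟨fun h i ⟨x, hx⟩ => ?_, fun h x i hi => ?_⟩
  · exact not_lt.1 fun hi => hx (h x i hi)
  · exact map_single_eq_zero_of_notMem_laurentSupport (fun hmem => (h hmem).not_gt hi) x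

theorem ppuNeg_iff_laurentSupport_subset : PPUneg k V b φ ↔
    IsPPU k V b φ ∧ laurentSupport φ.toLinearMap ⊆ Set.Iic 0 := by
  refine and_congr_right fun _ => ⟨fun h i ⟨x, hx⟩ => ?_, fun h x i hi => ?_⟩
  · exact not_lt.1 fun hi => hx (h x i hi)
  · exact map_single_eq_zero_of_notMem_laurentSupport (fun hmem => (h hmem).not_gt hi) x

namespace PPUpos

protected theorem one : PPUpos k V b 1 :=
  ppuPos_iff_laurentSupport_subset.2 ⟨.one, laurentSupport_one_subset.trans (by simp)⟩

protected theorem mul (hφ : PPUpos k V b φ) (hψ : PPUpos k V b ψ) : PPUpos k V b (φ * ψ) := by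
  rw [ppuPos_iff_laurentSupport_subset] at hφ hψ ⊢
  exact ⟨hφ.1.mul hψ.1, (laurentSupport_mul_subset hφ.1.1.commute_shift _).trans <|
    (Set.add_subset_add hφ.2 hψ.2).trans <| by simpa using Set.Ici_add_Ici_subset (0 : ℤ) 0⟩

theorem ppuNeg_inv (hb : b.SeparatingRight) (hφ : PPUpos k V b φ) : PPUneg k V b φ⁻¹ := by
  rw [ppuPos_iff_laurentSupport_subset] at hφ
  exact ppuNeg_iff_laurentSupport_subset.2 ⟨hφ.1.inv,
    (laurentSupport_inv_subset hb hφ.1.1.2).trans <| (Set.neg_subset_neg.2 hφ.2).trans <| by simp⟩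

theorem eq_one_of_ppuNeg (hpos : PPUpos k V b φ) (hneg : PPUneg k V b φ) : φ = 1 := by
  rw [ppuPos_iff_laurentSupport_subset] at hpos
  have hsupp : laurentSupport φ.toLinearMap ⊆ {0} := fun _ hi =>
    le_antisymm ((ppuNeg_iff_laurentSupport_subset.1 hneg).2 hi) (hpos.2 hi)
  exact LinearEquiv.toLinearMap_injective
    (eq_one_of_laurentSupport_subset_zero hpos.1.1.commute_shift hpos.1.2 hsupp)

end PPUpos

namespace PPUneg

protected theorem one : PPUneg k V b 1 :=
  ppuNeg_iff_laurentSupport_subset.2 ⟨.one, laurentSupport_one_subset.trans (by simp)⟩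

protected theorem mul (hφ : PPUneg k V b φ) (hψ : PPUneg k V b ψ) : PPUneg k V b (φ * ψ) := by
  rw [ppuNeg_iff_laurentSupport_subset] at hφ hψ ⊢
  exact ⟨hφ.1.mul hψ.1, (laurentSupport_mul_subset hφ.1.1.commute_shift _).trans <|
    (Set.add_subset_add hφ.2 hψ.2).trans <| by simpa using Set.Iic_add_Iic_subset (0 : ℤ) 0⟩

theorem ppuPos_inv (hb : b.SeparatingRight) (hφ : PPUneg k V b φ) : PPUpos k V b φ⁻¹ := by
  rw [ppuNeg_iff_laurentSupport_subset] at hφ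
  exact ppuPos_iff_laurentSupport_subset.2 ⟨hφ.1.inv,
    (laurentSupport_inv_subset hb hφ.1.1.2).trans <| (Set.neg_subset_neg.2 hφ.2).trans <| by simp⟩

end PPUneg

theorem PPUpos.eq_one_of_ppuPos_inv (hb : b.SeparatingRight) (hφ : PPUpos k V b φ)
    (hinv : PPUpos k V b φ⁻¹) : φ = 1 :=
  inv_eq_one.1 (hinv.eq_one_of_ppuNeg (hφ.ppuNeg_inv hb))

end

theorem stmt5_general (b : LinearMap.BilinForm k V) (hb : b.SeparatingRight) :
    (∀ φ, PPUpos k V b φ → PPUneg k V b φ⁻¹) ∧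
    (∀ φ, PPUpos k V b φ → PPUneg k V b φ → φ = 1) ∧
    PPUpos k V b 1 ∧ PPUneg k V b 1 ∧
    (∀ φ ψ, PPUpos k V b φ → PPUpos k V b ψ → PPUpos k V b (φ * ψ)) ∧
    (∀ φ ψ, PPUneg k V b φ → PPUneg k V b ψ → PPUneg k V b (φ * ψ)) ∧
    (∀ φ, PPUpos k V b φ → PPUpos k V b φ⁻¹ → φ = 1) ∧
    (∀ φ ψ, IsPPU k V b φ → IsPPU k V b ψ →
      (PPUpos k V b (ψ * φ⁻¹) ↔ PPUneg k V b (φ * ψ⁻¹))) ∧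
    (∀ φ, IsPPU k V b φ → PPUpos k V b (φ * φ⁻¹)) ∧
    (∀ φ ψ, IsPPU k V b φ → IsPPU k V b ψ →
      PPUpos k V b (ψ * φ⁻¹) → PPUpos k V b (φ * ψ⁻¹) → φ = ψ) ∧
    (∀ φ ψ χ, IsPPU k V b φ → IsPPU k V b ψ → IsPPU k V b χ →
      PPUpos k V b (ψ * φ⁻¹) → PPUpos k V b (χ * ψ⁻¹) → PPUpos k V b (χ * φ⁻¹)) ∧
    (∀ φ ψ χ, IsPPU k V b φ → IsPPU k V b ψ → IsPPU k V b χ →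
      PPUpos k V b (ψ * φ⁻¹) → PPUpos k V b ((ψ * χ) * (φ * χ)⁻¹)) := by
  have inv_ratio (φ ψ : (ℤ →₀ V) ≃ₗ[k] (ℤ →₀ V)) : (ψ * φ⁻¹)⁻¹ = φ * ψ⁻¹ := by
    rw [mul_inv_rev, inv_inv]
  refine ⟨fun φ h => h.ppuNeg_inv hb, fun φ => PPUpos.eq_one_of_ppuNeg, .one, .one,
    fun φ ψ => PPUpos.mul, fun φ ψ => PPUneg.mul, fun φ => PPUpos.eq_one_of_ppuPos_inv hb,
    fun φ ψ _ _ => ⟨fun h => inv_ratio φ ψ ▸ h.ppuNeg_inv hb,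
      fun h => inv_ratio ψ φ ▸ h.ppuPos_inv hb⟩,
    fun φ _ => mul_inv_cancel φ ▸ .one, fun φ ψ _ _ hφψ hψφ => ?antisymm,
    fun φ ψ χ _ _ _ hφψ hψχ => ?trans, fun φ ψ χ _ _ _ h => ?rightInvariant⟩
  case antisymm => exact mul_inv_eq_one.1 (hψφ.eq_one_of_ppuPos_inv hb (inv_ratio ψ φ ▸ hφψ))
  case trans => simpa [mul_assoc] using hψχ.mul hφψ
  case rightInvariant => simpa [mul_assoc] using h

/-- Inverses of elements of `PPU(b)⁺` lie in `PPU(b)⁻`,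
`PPU(b)⁺ ∩ PPU(b)⁻ = {1}`, `PPU(b)⁺` and `PPU(b)⁻` are submonoids with
`PPU(b)⁺ ∩ (PPU(b)⁺)⁻¹ = {1}`, and `φ ≤ ψ :⟺ ψφ⁻¹ ∈ PPU(b)⁺ ⟺ φψ⁻¹ ∈ PPU(b)⁻`
is a right-invariant partial order on `PPU(b)`. -/
theorem stmt5 [FiniteDimensional k V] (b : LinearMap.BilinForm k V)
    (hsymm : ∀ v w : V, b v w = b w v)
    (haniso : ∀ v : V, b v v = 0 → v = 0) :
    (∀ φ, PPUpos k V b φ → PPUneg k V b φ⁻¹) ∧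
    (∀ φ, PPUpos k V b φ → PPUneg k V b φ → φ = 1) ∧
    PPUpos k V b 1 ∧ PPUneg k V b 1 ∧
    (∀ φ ψ, PPUpos k V b φ → PPUpos k V b ψ → PPUpos k V b (φ * ψ)) ∧
    (∀ φ ψ, PPUneg k V b φ → PPUneg k V b ψ → PPUneg k V b (φ * ψ)) ∧
    (∀ φ, PPUpos k V b φ → PPUpos k V b φ⁻¹ → φ = 1) ∧
    (∀ φ ψ, IsPPU k V b φ → IsPPU k V b ψ →
      (PPUpos k V b (ψ * φ⁻¹) ↔ PPUneg k V b (φ * ψ⁻¹))) ∧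
    (∀ φ, IsPPU k V b φ → PPUpos k V b (φ * φ⁻¹)) ∧
    (∀ φ ψ, IsPPU k V b φ → IsPPU k V b ψ →
      PPUpos k V b (ψ * φ⁻¹) → PPUpos k V b (φ * ψ⁻¹) → φ = ψ) ∧
    (∀ φ ψ χ, IsPPU k V b φ → IsPPU k V b ψ → IsPPU k V b χ →
      PPUpos k V b (ψ * φ⁻¹) → PPUpos k V b (χ * ψ⁻¹) → PPUpos k V b (χ * φ⁻¹)) ∧
    (∀ φ ψ χ, IsPPU k V b φ → IsPPU k V b ψ → IsPPU k V b χ →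
      PPUpos k V b (ψ * φ⁻¹) → PPUpos k V b ((ψ * χ) * (φ * χ)⁻¹)) :=
  stmt5_general k V b fun w hw => haniso w (hw w)
end
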